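/- arXiv:2011.13977 — 2 statements merged into one kernel-verified Lean document; each statement's English description precedes it below -/
import Mathlib

section
/- Let I be an instance with n ≥ 8 agents and n objects, let μ_1 be any matching of G_I, and let μ_2 be a matching of G_I that maximizes the number of agents matched by an edge of rank at most k, where k = ⌊n^{1/3}/2⌋. Let L_i (respectively X'_i) denote the set of agents matched by a rank-i edge in μ_1 (respectively μ_2), and let X' = ∪_{i=1}^{k} X'_i. Then |X'| ≥ min{k, Σ_{i=k+1}^{n} |L_i|}. -/
open Finset
open scoped Classical

/-- A one-sided matching instance with `n` agents and `n` objects.  Agent `i` has a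
nonempty acceptable set `accept i` and a weak order `pref i` on it
(`pref i h h'` means agent `i` weakly prefers object `h` to object `h'`). -/
structure OSMInstance (n : ℕ) where
  accept : Fin n → Finset (Fin n)
  accept_nonempty : ∀ i, (accept i).Nonempty
  pref : Fin n → Fin n → Fin n → Prop
  pref_refl : ∀ i h, h ∈ accept i → pref i h h
  pref_trans : ∀ i h₁ h₂ h₃, h₁ ∈ accept i → h₂ ∈ accept i → h₃ ∈ accept i →
    pref i h₁ h₂ → pref i h₂ h₃ → pref i h₁ h₃
  pref_total : ∀ i h₁ h₂, h₁ ∈ accept i → h₂ ∈ accept i → pref i h₁ h₂ ∨ pref i h₂ h₁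

namespace OSMInstance

variable {n : ℕ}

/-- Agent `i` strictly prefers object `h` to object `h'`. -/
def strictPref (I : OSMInstance n) (i h h' : Fin n) : Prop :=
  I.pref i h h' ∧ ¬ I.pref i h' h

/-- The rank of the edge `(i, h)` of `G_I`: one plus the number of acceptable objects
that agent `i` strictly prefers to `h`. -/
noncomputable def edgeRank (I : OSMInstance n) (e : Fin n × Fin n) : ℕ :=
  ((I.accept e.1).filter (fun h' => I.strictPref e.1 h' e.2)).card + 1

/-- A matching of `G_I`: a set of acceptable (agent, object) pairs in which every agent
and every object occurs at most once. -/
def IsMatching (I : OSMInstance n) (μ : Finset (Fin n × Fin n)) : Prop :=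
  (∀ e ∈ μ, e.2 ∈ I.accept e.1) ∧
  (∀ e ∈ μ, ∀ e' ∈ μ, e.1 = e'.1 → e = e') ∧
  (∀ e ∈ μ, ∀ e' ∈ μ, e.2 = e'.2 → e = e')

/-- Total weight of a set of edges under the edge weights `w`. -/
def weightSum (w : Fin n × Fin n → ℝ) (μ : Finset (Fin n × Fin n)) : ℝ :=
  ∑ e ∈ μ, w e

/-- Social welfare of the set of edges `μ` under the valuation profile `v`. -/
def SW (_I : OSMInstance n) (v : Fin n → Fin n → ℝ) (μ : Finset (Fin n × Fin n)) : ℝ :=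
  ∑ e ∈ μ, v e.1 e.2

/-- `μ` is a maximum-weight matching of `G_I` with respect to edge weights `w`. -/
def IsMaxWeightMatching (I : OSMInstance n) (w : Fin n × Fin n → ℝ)
    (μ : Finset (Fin n × Fin n)) : Prop :=
  I.IsMatching μ ∧ ∀ μ', I.IsMatching μ' → weightSum w μ' ≤ weightSum w μ

/-- `μ` is a priority-`p` matching: a maximum-weight matching when every rank-`r` edge
gets weight `p r`. -/
noncomputable def IsPriorityMatching (I : OSMInstance n) (p : ℕ → ℝ)
    (μ : Finset (Fin n × Fin n)) : Prop :=
  I.IsMaxWeightMatching (fun e => p (I.edgeRank e)) μ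

/-- `v` is a valuation profile consistent with the instance: values lie in `[0,1]`,
unacceptable objects have value `0`, and on acceptable objects the values represent
the weak order. -/
def Consistent (I : OSMInstance n) (v : Fin n → Fin n → ℝ) : Prop :=
  (∀ i h, 0 ≤ v i h ∧ v i h ≤ 1) ∧
  (∀ i h, h ∉ I.accept i → v i h = 0) ∧
  (∀ i h h', h ∈ I.accept i → h' ∈ I.accept i → (I.pref i h h' ↔ v i h' ≤ v i h))

/-- Unit-sum valuations: each agent's values over acceptable objects sum to `1`. -/
def UnitSum (I : OSMInstance n) (v : Fin n → Fin n → ℝ) : Prop :=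
  ∀ i, ∑ h ∈ I.accept i, v i h = 1

/-- Unit-range valuations: each agent values some acceptable object `1`, some
acceptable object `0`, and has two non-equivalent acceptable objects. -/
def UnitRange (I : OSMInstance n) (v : Fin n → Fin n → ℝ) : Prop :=
  ∀ i, (∃ h ∈ I.accept i, v i h = 1) ∧ (∃ h ∈ I.accept i, v i h = 0) ∧
    ∃ h ∈ I.accept i, ∃ h' ∈ I.accept i, I.strictPref i h h'

/-- Agent `i` is unmatched in `μ`. -/
def Unmatched (_I : OSMInstance n) (μ : Finset (Fin n × Fin n)) (i : Fin n) : Prop :=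
  ∀ h, (i, h) ∉ μ

/-- Agent `i` weakly prefers their allocation in `μ'` to their allocation in `μ`
(being unmatched is strictly worse than receiving any acceptable object). -/
def WeakImprove (I : OSMInstance n) (μ' μ : Finset (Fin n × Fin n)) (i : Fin n) : Prop :=
  I.Unmatched μ i ∨ ∃ h h', (i, h) ∈ μ ∧ (i, h') ∈ μ' ∧ I.pref i h' h

/-- Agent `i` strictly prefers their allocation in `μ'` to their allocation in `μ`. -/
def StrictImprove (I : OSMInstance n) (μ' μ : Finset (Fin n × Fin n)) (i : Fin n) : Prop :=
  (I.Unmatched μ i ∧ ∃ h', (i, h') ∈ μ') ∨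
    ∃ h h', (i, h) ∈ μ ∧ (i, h') ∈ μ' ∧ I.strictPref i h' h

/-- `μ` is a Pareto optimal matching of `G_I`. -/
def ParetoOptimal (I : OSMInstance n) (μ : Finset (Fin n × Fin n)) : Prop :=
  I.IsMatching μ ∧
    ¬ ∃ μ', I.IsMatching μ' ∧ (∀ i, I.WeakImprove μ' μ i) ∧ ∃ i, I.StrictImprove μ' μ i

/-- `sig I μ r` is the number of rank-`r` edges of `μ` (as an integer). -/
noncomputable def sig (I : OSMInstance n) (μ : Finset (Fin n × Fin n)) (r : ℕ) : ℤ :=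
  ((μ.filter (fun e => I.edgeRank e = r)).card : ℤ)

end OSMInstance

/-- Lexicographic comparison `f ≤ g` of the length-`len` tuples `(f 0, …, f (len-1))`
and `(g 0, …, g (len-1))`. -/
def LexLe (len : ℕ) (f g : ℕ → ℤ) : Prop :=
  (∀ j < len, f j = g j) ∨ ∃ j < len, (∀ i < j, f i = g i) ∧ f j < g j

namespace OSMInstance

variable {n : ℕ}

/-- `μ` is a rank-maximal matching: it lexicographically maximizes `(s_1, …, s_n)`. -/
noncomputable def RankMaximal (I : OSMInstance n) (μ : Finset (Fin n × Fin n)) : Prop :=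
  I.IsMatching μ ∧ ∀ μ', I.IsMatching μ' →
    LexLe n (fun j => I.sig μ' (j + 1)) (fun j => I.sig μ (j + 1))

/-- `μ` is a max-cardinality rank-maximal matching: it lexicographically maximizes
`(Σ_i s_i, s_1, …, s_n)`. -/
noncomputable def MaxCardRankMaximal (I : OSMInstance n) (μ : Finset (Fin n × Fin n)) : Prop :=
  I.IsMatching μ ∧ ∀ μ', I.IsMatching μ' →
    LexLe (n + 1) (fun j => if j = 0 then (μ'.card : ℤ) else I.sig μ' j)
      (fun j => if j = 0 then (μ.card : ℤ) else I.sig μ j)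

/-- `μ` is a fair matching: it lexicographically maximizes
`(Σ_i s_i, -s_n, -s_(n-1), …, -s_1)`. -/
noncomputable def FairMatching (I : OSMInstance n) (μ : Finset (Fin n × Fin n)) : Prop :=
  I.IsMatching μ ∧ ∀ μ', I.IsMatching μ' →
    LexLe (n + 1) (fun j => if j = 0 then (μ'.card : ℤ) else -I.sig μ' (n + 1 - j))
      (fun j => if j = 0 then (μ.card : ℤ) else -I.sig μ (n + 1 - j))

end OSMInstance

/-- The priority vector for rank-maximal matchings: a rank-`r` edge gets weight
`n ^ (2 * (n - r + 1))`. -/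
noncomputable def pRankMaximal (n : ℕ) : ℕ → ℝ :=
  fun r => (n : ℝ) ^ (2 * (n - r + 1))

/-- The priority vector for max-cardinality rank-maximal matchings: a rank-`r` edge gets
weight `n ^ (2 * n) + n ^ (2 * (n - r))`. -/
noncomputable def pMaxCardRankMaximal (n : ℕ) : ℕ → ℝ :=
  fun r => (n : ℝ) ^ (2 * n) + (n : ℝ) ^ (2 * (n - r))

/-- The priority vector for fair matchings: a rank-`r` edge gets weight
`4 * n ^ (2 * n) - 2 * n ^ (r - 1)`. -/
noncomputable def pFairVec (n : ℕ) : ℕ → ℝ :=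
  fun r => 4 * (n : ℝ) ^ (2 * n) - 2 * (n : ℝ) ^ (r - 1)

/-- The set `𝕡` of the three priority vectors of interest. -/
noncomputable def PrioritySet (n : ℕ) : Set (ℕ → ℝ) :=
  {pRankMaximal n, pMaxCardRankMaximal n, pFairVec n}

/-- The four matching properties considered: Pareto optimal, rank-maximal,
max-cardinality rank-maximal, and fair. -/
inductive MatchProp where
  | po | rm | mcrm | fair

/-- `μ` satisfies the property `X` with respect to the instance `I`. -/
noncomputable def SatisfiesProp {n : ℕ} (X : MatchProp) (I : OSMInstance n)
    (μ : Finset (Fin n × Fin n)) : Prop :=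
  match X with
  | .po => I.ParetoOptimal μ
  | .rm => I.RankMaximal μ
  | .mcrm => I.MaxCardRankMaximal μ
  | .fair => I.FairMatching μ

namespace OSMInstance

variable {n : ℕ}

/-- A strictly preferred acceptable object has a strictly smaller rank. -/
theorem edgeRank_lt_of_strictPref (I : OSMInstance n) {i x y : Fin n}
    (hx : x ∈ I.accept i) (hy : y ∈ I.accept i) (h : I.strictPref i y x) :
    I.edgeRank (i, y) < I.edgeRank (i, x) := by
  refine Nat.succ_lt_succ (Finset.card_lt_card ((Finset.ssubset_iff_of_subset ?_).2 ⟨y, ?_, ?_⟩))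
  · intro z hz
    obtain ⟨hzA, hzy⟩ := Finset.mem_filter.1 hz
    exact Finset.mem_filter.2 ⟨hzA, I.pref_trans i z y x hzA hy hx hzy.1 h.1,
      fun hxz => hzy.2 (I.pref_trans i y x z hy hx hzA h.1 hxz)⟩
  · exact Finset.mem_filter.2 ⟨hy, h⟩
  · exact fun hyy => (Finset.mem_filter.1 hyy).2.2 (I.pref_refl i y hy)

/-- An agent with an acceptable object of rank larger than `k` has at least `k` acceptable
objects of rank at most `k`. -/
theorem le_card_filter_edgeRank_le (I : OSMInstance n) {i x : Fin n} {k : ℕ}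
    (hx : x ∈ I.accept i) (hk : k < I.edgeRank (i, x)) :
    k ≤ ((I.accept i).filter (fun h => I.edgeRank (i, h) ≤ k)).card := by
  obtain ⟨y, hy, hmin⟩ := ((I.accept i).filter (fun h => k < I.edgeRank (i, h))).exists_min_image
    (fun h => I.edgeRank (i, h)) ⟨x, Finset.mem_filter.2 ⟨hx, hk⟩⟩
  obtain ⟨hyA, hyk⟩ := Finset.mem_filter.1 hy
  refine (Nat.lt_succ_iff.1 hyk).trans (Finset.card_le_card fun z hz => ?_)
  obtain ⟨hzA, hzy⟩ := Finset.mem_filter.1 hz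
  refine Finset.mem_filter.2 ⟨hzA, not_lt.1 fun hzk => ?_⟩
  exact (hmin z (Finset.mem_filter.2 ⟨hzA, hzk⟩)).not_gt
    (I.edgeRank_lt_of_strictPref hyA hzA hzy)

theorem IsMatching.subset {I : OSMInstance n} {μ ν : Finset (Fin n × Fin n)}
    (hμ : I.IsMatching μ) (h : ν ⊆ μ) : I.IsMatching ν :=
  ⟨fun e he => hμ.1 e (h he), fun e he e' he' => hμ.2.1 e (h he) e' (h he'),
    fun e he e' he' => hμ.2.2 e (h he) e' (h he')⟩

/-- Adding an acceptable edge with unmatched endpoints preserves being a matching. -/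
theorem IsMatching.insert {I : OSMInstance n} {μ : Finset (Fin n × Fin n)}
    (hμ : I.IsMatching μ) {i h : Fin n} (hA : h ∈ I.accept i)
    (hi : i ∉ μ.image Prod.fst) (hh : h ∉ μ.image Prod.snd) :
    I.IsMatching (insert (i, h) μ) := by
  have hi' : ∀ e ∈ μ, e.1 ≠ i := fun e he hei => hi (Finset.mem_image.2 ⟨e, he, hei⟩)
  have hh' : ∀ e ∈ μ, e.2 ≠ h := fun e he heh => hh (Finset.mem_image.2 ⟨e, he, heh⟩)
  refine ⟨fun e he => ?_, fun e he e' he' hee => ?_, fun e he e' he' hee => ?_⟩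
  · rcases Finset.mem_insert.1 he with rfl | he
    exacts [hA, hμ.1 e he]
  · rcases Finset.mem_insert.1 he with rfl | he <;> rcases Finset.mem_insert.1 he' with rfl | he'
    exacts [rfl, (hi' e' he' hee.symm).elim, (hi' e he hee).elim, hμ.2.1 e he e' he' hee]
  · rcases Finset.mem_insert.1 he with rfl | he <;> rcases Finset.mem_insert.1 he' with rfl | he'
    exacts [rfl, (hh' e' he' hee.symm).elim, (hh' e he hee).elim, hμ.2.2 e he e' he' hee]

end OSMInstance

/-- a matching maximizing the number of agents matched by an edge of rank
at most `k = ⌊n^(1/3)/2⌋` matches at least `min k (Σ_{i>k} |L_i|)` such agents, where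
`L_i` counts agents matched by rank-`i` edges in an arbitrary matching `μ₁`. -/
theorem boundX {n : ℕ} (hn : 8 ≤ n) (I : OSMInstance n)
    (μ₁ : Finset (Fin n × Fin n)) (hμ₁ : I.IsMatching μ₁)
    (k : ℕ) (hk : k = ⌊(n : ℝ) ^ ((1 : ℝ) / 3) / 2⌋₊)
    (μ₂ : Finset (Fin n × Fin n)) (hμ₂ : I.IsMatching μ₂)
    (hmax : ∀ μ'', I.IsMatching μ'' →
      (μ''.filter (fun e => I.edgeRank e ≤ k)).card ≤
        (μ₂.filter (fun e => I.edgeRank e ≤ k)).card) :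
    min k ((μ₁.filter (fun e => k + 1 ≤ I.edgeRank e ∧ I.edgeRank e ≤ n)).card) ≤
      (μ₂.filter (fun e => I.edgeRank e ≤ k)).card := by
  by_contra! hlt
  obtain ⟨hltk, hltL⟩ := lt_min_iff.1 hlt
  set X := μ₂.filter (fun e => I.edgeRank e ≤ k)
  set L := μ₁.filter (fun e => k + 1 ≤ I.edgeRank e ∧ I.edgeRank e ≤ n)
  have hLcard : (L.image Prod.fst).card = L.card :=
    Finset.card_image_of_injOn fun e he e' he' =>
      hμ₁.2.1 e (Finset.mem_filter.1 he).1 e' (Finset.mem_filter.1 he').1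
  obtain ⟨i, hiL, hiX⟩ := Finset.exists_mem_notMem_of_card_lt_card
    (Finset.card_image_le.trans_lt (hltL.trans_eq hLcard.symm) :
      (X.image Prod.fst).card < (L.image Prod.fst).card)
  obtain ⟨⟨_, x⟩, he, rfl⟩ := Finset.mem_image.1 hiL
  obtain ⟨heμ, hek, -⟩ := Finset.mem_filter.1 he
  obtain ⟨h, hh, hhX⟩ := Finset.exists_mem_notMem_of_card_lt_card
    ((Finset.card_image_le (s := X) (f := Prod.snd)).trans_lt
      (hltk.trans_le (I.le_card_filter_edgeRank_le (hμ₁.1 _ heμ) hek)))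
  obtain ⟨hhA, hhk⟩ := Finset.mem_filter.1 hh
  have hm := hmax _ ((hμ₂.subset (Finset.filter_subset _ _)).insert hhA hiX hhX)
  rw [Finset.filter_true_of_mem, Finset.card_insert_of_notMem] at hm
  · exact absurd hm (Nat.not_succ_le_self _)
  · exact fun hmem => hiX (Finset.mem_image.2 ⟨_, hmem, rfl⟩)
  · intro e he
    rcases Finset.mem_insert.1 he with rfl | he
    exacts [hhk, (Finset.mem_filter.1 he).2]
end

section
/- There exists a constant C > 0 such that for every n ≥ 2 and every instance I with n agents and n objects, the following two statements hold. (i) There exist a threshold matrix T assigning to each pair (a_i, h_j) a value T(a_i, h_j) ∈ [0,1] and an outcome map f from {0,1}-valued n×n answer matrices to matchings of G_I, such that for every unit-range valuation profile v consistent with I, letting b_v(i,j) = 1 iff v_i(h_j) ≥ T(a_i, h_j), the matching f(b_v) is Pareto optimal and SW(μ* | v) ≤ C·√n·SW(f(b_v) | v), where μ* is a Pareto optimal matching of maximum social welfare under v. (ii) For every p ∈ 𝕡 there exist such T and f for which f(b_v) is a priority-p matching and SW(μ* | v) ≤ C·√n·SW(f(b_v) | v), where μ* is a priority-p matching of maximum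 social welfare under v. -/
open Finset
open scoped Classical

namespace OSMInstance

variable {n : ℕ} (I : OSMInstance n)

/-- The total weight of a set of edges, grouped by agent. -/
theorem weightSum_eq_sum_fiber (w : Fin n × Fin n → ℝ) (μ : Finset (Fin n × Fin n)) :
    weightSum w μ = ∑ i, ∑ e ∈ μ with e.1 = i, w e :=
  (Finset.sum_fiberwise μ (fun e => e.1) w).symm

variable {I}

/-- In a matching, the edges at a matched agent form a singleton. -/
theorem IsMatching.filter_fst_eq {μ : Finset (Fin n × Fin n)} (hμ : I.IsMatching μ)
    {i h : Fin n} (hm : (i, h) ∈ μ) : ({e ∈ μ | e.1 = i} : Finset _) = {(i, h)} := by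
  ext e
  simp only [mem_filter, mem_singleton]
  constructor
  · rintro ⟨he, hei⟩
    exact hμ.2.1 e he (i, h) hm hei
  · rintro rfl
    exact ⟨hm, rfl⟩

/-- A matching has at most `n` edges. -/
theorem IsMatching.card_le {μ : Finset (Fin n × Fin n)} (hμ : I.IsMatching μ) :
    μ.card ≤ n := by
  have h := Finset.card_le_card_of_injOn (s := μ) (t := (univ : Finset (Fin n)))
    (fun e => e.1) (fun _ _ => by simp)
    (fun a ha b hb hab => hμ.2.1 a ha b hb hab)
  simpa using h

theorem edgeRank_le {i h : Fin n} (hh : h ∈ I.accept i) : I.edgeRank (i, h) ≤ n := by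
  have hlt : ((I.accept i).filter (fun h' => I.strictPref i h' h)).card
      < (univ : Finset (Fin n)).card := by
    apply Finset.card_lt_card
    rw [Finset.ssubset_univ_iff]
    intro heq
    have hmem : h ∈ (I.accept i).filter (fun h' => I.strictPref i h' h) := by
      rw [heq]; exact mem_univ h
    exact (mem_filter.1 hmem).2.2 (I.pref_refl i h hh)
  rw [card_univ, Fintype.card_fin] at hlt
  exact hlt

theorem one_le_edgeRank (e : Fin n × Fin n) : 1 ≤ I.edgeRank e :=
  Nat.le_add_left 1 _

theorem filter_strictPref_subset {i h h' : Fin n} (hh : h ∈ I.accept i) (hh' : h' ∈ I.accept i)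
    (hp : I.pref i h' h) :
    (I.accept i).filter (fun x => I.strictPref i x h') ⊆
      (I.accept i).filter (fun x => I.strictPref i x h) := by
  intro x hx
  obtain ⟨hxa, hx1, hx2⟩ := mem_filter.1 hx
  exact mem_filter.2 ⟨hxa, I.pref_trans i x h' h hxa hh' hh hx1 hp,
    fun hc => hx2 (I.pref_trans i h' h x hh' hh hxa hp hc)⟩

theorem edgeRank_le_of_pref {i h h' : Fin n} (hh : h ∈ I.accept i) (hh' : h' ∈ I.accept i)
    (hp : I.pref i h' h) : I.edgeRank (i, h') ≤ I.edgeRank (i, h) :=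
  Nat.succ_le_succ (card_le_card (filter_strictPref_subset hh hh' hp))

theorem edgeRank_lt_of_strictPref_s15 {i h h' : Fin n} (hh : h ∈ I.accept i)
    (hh' : h' ∈ I.accept i) (hp : I.strictPref i h' h) :
    I.edgeRank (i, h') < I.edgeRank (i, h) := by
  refine Nat.succ_lt_succ (card_lt_card ?_)
  refine (Finset.ssubset_iff_of_subset (filter_strictPref_subset hh hh' hp.1)).2
    ⟨h', mem_filter.2 ⟨hh', hp⟩, fun hc => ?_⟩
  exact (mem_filter.1 hc).2.2 (I.pref_refl i h' hh')

theorem isMatching_empty : I.IsMatching ∅ := by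
  simp [IsMatching]

variable (I) in
/-- Maximum-weight matchings exist. -/
theorem exists_isMaxWeightMatching (w : Fin n × Fin n → ℝ) :
    ∃ μ, I.IsMaxWeightMatching w μ := by
  obtain ⟨μ, hμ, hmax⟩ := Finset.exists_max_image
    ((univ : Finset (Finset (Fin n × Fin n))).filter I.IsMatching) (weightSum w)
    ⟨∅, by simp [isMatching_empty]⟩
  exact ⟨μ, (mem_filter.1 hμ).2, fun ν hν => hmax ν (by simp [hν])⟩

/-- Priority matchings for positive, strictly decreasing priorities are Pareto optimal. -/
theorem IsPriorityMatching.paretoOptimal {p : ℕ → ℝ}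
    (hpos : ∀ r, 1 ≤ r → r ≤ n → 0 < p r) (hanti : ∀ r s, 1 ≤ r → r < s → s ≤ n → p s < p r)
    {μ : Finset (Fin n × Fin n)} (hμ : I.IsPriorityMatching p μ) : I.ParetoOptimal μ := by
  refine ⟨hμ.1, ?_⟩
  rintro ⟨μ', hm', hweak, i₀, hstrict⟩
  refine absurd (hμ.2 μ' hm') (not_le.2 ?_)
  rw [weightSum_eq_sum_fiber, weightSum_eq_sum_fiber]
  have hacc : ∀ {i h}, (i, h) ∈ μ → h ∈ I.accept i := fun hm => hμ.1.1 _ hm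
  have hacc' : ∀ {i h}, (i, h) ∈ μ' → h ∈ I.accept i := fun hm => hm'.1 _ hm
  have hunmatched : ∀ i, I.Unmatched μ i →
      ({e ∈ μ | e.1 = i} : Finset (Fin n × Fin n)) = ∅ := by
    intro i hu
    refine filter_eq_empty_iff.2 ?_
    rintro ⟨a, b⟩ he rfl
    exact hu b he
  refine Finset.sum_lt_sum (fun i _ => ?_) ⟨i₀, mem_univ _, ?_⟩
  · rcases hweak i with hu | ⟨h, h', hm, hm1, hp⟩
    · rw [hunmatched i hu, sum_empty]
      refine sum_nonneg fun e he => (hpos _ (one_le_edgeRank e) ?_).le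
      exact edgeRank_le (hm'.1 e (mem_filter.1 he).1)
    · rw [hμ.1.filter_fst_eq hm, hm'.filter_fst_eq hm1, sum_singleton, sum_singleton]
      rcases (edgeRank_le_of_pref (hacc hm) (hacc' hm1) hp).eq_or_lt with heq | hlt
      · rw [heq]
      · exact (hanti _ _ (one_le_edgeRank _) hlt (edgeRank_le (hacc hm))).le
  · rcases hstrict with ⟨hu, h', hm1⟩ | ⟨h, h', hm, hm1, hp⟩
    · rw [hunmatched i₀ hu, sum_empty, hm'.filter_fst_eq hm1, sum_singleton]
      exact hpos _ (one_le_edgeRank _) (edgeRank_le (hacc' hm1))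
    · rw [hμ.1.filter_fst_eq hm, hm'.filter_fst_eq hm1, sum_singleton, sum_singleton]
      exact hanti _ _ (one_le_edgeRank _)
        (edgeRank_lt_of_strictPref_s15 (hacc hm) (hacc' hm1) hp) (edgeRank_le (hacc hm))

/-- A Pareto optimal matching admits no nonempty set `S` of agents who could all be
reassigned to strictly better, distinct objects without taking objects from outside `S`. -/
theorem ParetoOptimal.not_reassignable {μ : Finset (Fin n × Fin n)} (hμ : I.ParetoOptimal μ)
    (S : Set (Fin n)) (hS : S.Nonempty) (t : Fin n → Fin n) (hacc : ∀ i ∈ S, t i ∈ I.accept i)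
    (hinj : Set.InjOn t S) (hclosed : ∀ i ∈ S, ∀ j, (j, t i) ∈ μ → j ∈ S)
    (hbetter : ∀ i ∈ S, ∀ h, (i, h) ∈ μ → I.strictPref i (t i) h) : False := by
  let μ' : Finset (Fin n × Fin n) :=
    univ.filter fun e => (e ∈ μ ∧ e.1 ∉ S) ∨ (e.1 ∈ S ∧ e.2 = t e.1)
  have hmem : ∀ i h, (i, h) ∈ μ' ↔ ((i, h) ∈ μ ∧ i ∉ S) ∨ (i ∈ S ∧ h = t i) := by
    intro i h
    simp [μ']
  obtain ⟨hm, hnot⟩ := hμ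
  refine hnot ⟨μ', ⟨?_, ?_, ?_⟩, ?_, ?_⟩
  · rintro ⟨i, h⟩ he
    rcases (hmem i h).1 he with ⟨he, -⟩ | ⟨hi, rfl⟩
    · exact hm.1 _ he
    · exact hacc i hi
  · rintro ⟨i, h⟩ he ⟨j, k⟩ he' (rfl : i = j)
    rcases (hmem i h).1 he with ⟨he, hi⟩ | ⟨hi, rfl⟩ <;>
      rcases (hmem i k).1 he' with ⟨he', hi'⟩ | ⟨hi', rfl⟩
    · exact hm.2.1 _ he _ he' rfl
    · exact absurd hi' hi
    · exact absurd hi hi'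
    · rfl
  · rintro ⟨i, h⟩ he ⟨j, k⟩ he' (rfl : h = k)
    rcases (hmem i h).1 he with ⟨he, hi⟩ | ⟨hi, hit⟩ <;>
      rcases (hmem j h).1 he' with ⟨he', hj⟩ | ⟨hj, hjt⟩
    · exact hm.2.2 _ he _ he' rfl
    · exact absurd (hclosed j hj i (hjt ▸ he)) hi
    · exact absurd (hclosed i hi j (hit ▸ he')) hj
    · rw [hinj hi hj (hit.symm.trans hjt)]
  · intro i
    by_cases hu : I.Unmatched μ i
    · exact Or.inl hu
    · obtain ⟨h, hh⟩ : ∃ h, (i, h) ∈ μ := by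
        simpa [Unmatched] using hu
      refine Or.inr ?_
      by_cases hi : i ∈ S
      · exact ⟨h, t i, hh, (hmem _ _).2 (Or.inr ⟨hi, rfl⟩), (hbetter i hi h hh).1⟩
      · exact ⟨h, h, hh, (hmem _ _).2 (Or.inl ⟨hh, hi⟩), I.pref_refl i h (hm.1 _ hh)⟩
  · obtain ⟨i, hi⟩ := hS
    have hti : (i, t i) ∈ μ' := (hmem _ _).2 (Or.inr ⟨hi, rfl⟩)
    refine ⟨i, ?_⟩
    by_cases hu : I.Unmatched μ i
    · exact Or.inl ⟨hu, t i, hti⟩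
    · obtain ⟨h, hh⟩ : ∃ h, (i, h) ∈ μ := by
        simpa [Unmatched] using hu
      exact Or.inr ⟨h, t i, hh, hti, hbetter i hi h hh⟩

/-- In a Pareto optimal matching some agent receives an object of value `1`. -/
theorem ParetoOptimal.exists_value_eq_one (hn : 0 < n) {v : Fin n → Fin n → ℝ}
    (hv : I.Consistent v) (hur : I.UnitRange v) {μ : Finset (Fin n × Fin n)}
    (hμ : I.ParetoOptimal μ) : ∃ e ∈ μ, v e.1 e.2 = 1 := by
  by_contra! hne
  choose t hta ht using fun i => (hur i).1
  have hbetter : ∀ i h, (i, h) ∈ μ → I.strictPref i (t i) h := by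
    intro i h hm
    have ha := hμ.1.1 _ hm
    have hlt : v i h < v i (t i) := by
      rw [ht]
      exact lt_of_le_of_ne (hv.1 i h).2 (hne _ hm)
    exact ⟨(hv.2.2 i _ _ (hta i) ha).2 hlt.le, fun hc =>
      absurd ((hv.2.2 i _ _ ha (hta i)).1 hc) (not_le.2 hlt)⟩
  by_cases hfree : ∃ i, ∀ j, (j, t i) ∉ μ
  · obtain ⟨i, hi⟩ := hfree
    refine hμ.not_reassignable {i} ⟨i, rfl⟩ t (fun j _ => hta j) (Set.injOn_singleton t i) ?_
      (fun j _ => hbetter j)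
    rintro _ rfl j hj
    exact absurd hj (hi j)
  · push Not at hfree
    choose g hg using hfree
    have : NeZero n := ⟨hn.ne'⟩
    have hbij := Function.bijOn_periodicPts g
    refine hμ.not_reassignable (Function.periodicPts g) ?_ t (fun j _ => hta j) ?_ ?_
      (fun j _ => hbetter j)
    · obtain ⟨a, b, hab, heq⟩ : ∃ a b : ℕ, a < b ∧ g^[a] 0 = g^[b] 0 := by
        obtain ⟨a, b, hab, heq⟩ := Finite.exists_ne_map_eq_of_infinite (fun k : ℕ => g^[k] 0)
        rcases lt_or_gt_of_ne hab with h | h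
        · exact ⟨a, b, h, heq⟩
        · exact ⟨b, a, h, heq.symm⟩
      refine ⟨g^[a] 0, Function.mk_mem_periodicPts (Nat.sub_pos_of_lt hab) ?_⟩
      rw [Function.IsPeriodicPt, Function.IsFixedPt, ← Function.iterate_add_apply,
        Nat.sub_add_cancel hab.le, heq]
    · intro i hi j hj hij
      refine hbij.injOn hi hj ?_
      have := hμ.1.2.2 _ (hg i) _ (hg j) hij
      exact congrArg Prod.fst this
    · intro i hi j hj
      have := congrArg Prod.fst (hμ.1.2.2 _ hj _ (hg i) rfl)
      simp only at this
      rw [this]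
      exact hbij.mapsTo hi

/-- Asking every pair with threshold `1 / √n` and choosing, among a nonempty family of Pareto
optimal matchings, one with the most positively answered edges loses at most a factor `2√n`
against the best matching of the family. -/
theorem exists_threshold_algorithm (hn : 0 < n) (P : Finset (Fin n × Fin n) → Prop)
    (hP : ∀ μ, P μ → I.ParetoOptimal μ) (hex : ∃ μ, P μ) :
    ∃ T : Fin n → Fin n → ℝ, (∀ i j, 0 ≤ T i j ∧ T i j ≤ 1) ∧
      ∃ f : (Fin n → Fin n → Bool) → Finset (Fin n × Fin n),
        (∀ b, I.IsMatching (f b)) ∧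
        ∀ v : Fin n → Fin n → ℝ, I.Consistent v → I.UnitRange v →
          P (f (fun i j => decide (T i j ≤ v i j))) ∧
          ∀ μstar, P μstar →
            I.SW v μstar ≤
              2 * Real.sqrt n * I.SW v (f (fun i j => decide (T i j ≤ v i j))) := by
  have hmax : ∀ b : Fin n → Fin n → Bool, ∃ μ, P μ ∧ ∀ μ', P μ' →
      (μ'.filter fun e => b e.1 e.2 = true).card ≤ (μ.filter fun e => b e.1 e.2 = true).card := by
    intro b
    obtain ⟨μ₀, h₀⟩ := hex
    obtain ⟨μ, hμ, hle⟩ := Finset.exists_max_image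
      ((univ : Finset (Finset (Fin n × Fin n))).filter P)
      (fun μ => (μ.filter fun e => b e.1 e.2 = true).card) ⟨μ₀, by simp [h₀]⟩
    exact ⟨μ, (mem_filter.1 hμ).2, fun μ' h' => hle μ' (by simp [h'])⟩
  choose f hfP hfmax using hmax
  have hs1 : (1 : ℝ) ≤ Real.sqrt n := Real.one_le_sqrt.2 (by exact_mod_cast hn)
  have hs0 : (0 : ℝ) < Real.sqrt n := by linarith
  refine ⟨fun _ _ => 1 / Real.sqrt n, fun _ _ => ⟨by positivity, (div_le_one hs0).2 hs1⟩, f,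
    fun b => (hP _ (hfP b)).1, fun v hv hur => ⟨hfP _, fun μstar hstar => ?_⟩⟩
  set b : Fin n → Fin n → Bool := fun i j => decide (1 / Real.sqrt n ≤ v i j) with hb
  have hone : 1 ≤ I.SW v (f b) := by
    obtain ⟨e, he, hve⟩ := (hP _ (hfP b)).exists_value_eq_one hn hv hur
    rw [← hve]
    exact Finset.single_le_sum (f := fun e : Fin n × Fin n => v e.1 e.2)
      (fun e _ => (hv.1 e.1 e.2).1) he
  have hlower : (((f b).filter fun e => b e.1 e.2 = true).card : ℝ) ≤
      Real.sqrt n * I.SW v (f b) := by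
    rw [Finset.natCast_card_filter, SW, Finset.mul_sum]
    refine sum_le_sum fun e _ => ?_
    split_ifs with h
    · have h1 : 1 / Real.sqrt n ≤ v e.1 e.2 := by simpa [hb] using h
      rwa [div_le_iff₀' hs0] at h1
    · exact mul_nonneg hs0.le (hv.1 _ _).1
  have hupper : I.SW v μstar ≤
      ((μstar.filter fun e => b e.1 e.2 = true).card : ℝ) + Real.sqrt n := by
    have hcard : (μstar.card : ℝ) ≤ n := by exact_mod_cast (hP _ hstar).1.card_le
    calc I.SW v μstar
        ≤ ∑ e ∈ μstar, ((if b e.1 e.2 = true then 1 else 0) + 1 / Real.sqrt n) := by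
          refine sum_le_sum fun e _ => ?_
          have h0 : 0 ≤ 1 / Real.sqrt n := by positivity
          split_ifs with h
          · linarith [(hv.1 e.1 e.2).2]
          · have h1 : v e.1 e.2 < 1 / Real.sqrt n := by
              rw [hb] at h
              simpa only [decide_eq_true_eq, not_le] using h
            linarith
      _ = ((μstar.filter fun e => b e.1 e.2 = true).card : ℝ) +
            μstar.card / Real.sqrt n := by
          rw [sum_add_distrib, ← Finset.natCast_card_filter, sum_const, nsmul_eq_mul]
          ring
      _ ≤ _ := by
          gcongr
          rw [div_le_iff₀ hs0, Real.mul_self_sqrt (Nat.cast_nonneg n)]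
          exact hcard
  have hcmp : ((μstar.filter fun e => b e.1 e.2 = true).card : ℝ) ≤
      ((f b).filter fun e => b e.1 e.2 = true).card := by
    exact_mod_cast hfmax b μstar hstar
  nlinarith

end OSMInstance

/-- The three priority vectors are positive and strictly decreasing on the ranks `1, …, n`. -/
theorem PrioritySet.pos_and_anti {n : ℕ} (hn : 2 ≤ n) {p : ℕ → ℝ} (hp : p ∈ PrioritySet n) :
    (∀ r, 1 ≤ r → r ≤ n → 0 < p r) ∧ ∀ r s, 1 ≤ r → r < s → s ≤ n → p s < p r := by
  have hn1 : (1 : ℝ) < n := by exact_mod_cast hn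
  have hn0 : (0 : ℝ) < n := by linarith
  rcases hp with rfl | rfl | rfl
  · refine ⟨fun r _ _ => pow_pos hn0 _, fun r s _ hrs hs => ?_⟩
    exact pow_lt_pow_right₀ hn1 (by omega)
  · refine ⟨fun r _ _ => add_pos (pow_pos hn0 _) (pow_pos hn0 _), fun r s _ hrs hs => ?_⟩
    exact add_lt_add_right (pow_lt_pow_right₀ hn1 (by omega)) _
  · refine ⟨fun r _ hr => ?_, fun r s hr hrs _ => ?_⟩
    · have h1 : (n : ℝ) ^ (r - 1) ≤ (n : ℝ) ^ (2 * n) := pow_le_pow_right₀ hn1.le (by omega)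
      have h2 : 0 < (n : ℝ) ^ (2 * n) := pow_pos hn0 _
      simp only [pFairVec]
      linarith
    · have h1 : (n : ℝ) ^ (r - 1) < (n : ℝ) ^ (s - 1) := pow_lt_pow_right₀ hn1 (by omega)
      simp only [pFairVec]
      linarith

/-- for unit-range valuations there are non-adaptive deterministic
algorithms asking one binary threshold query per (agent, object) pair that output (i) a
Pareto optimal matching, respectively (ii) a priority-`p` matching for any `p ∈ 𝕡`,
achieving an `O(√n)`-approximation to the optimal welfare among matchings of the
respective kind. -/
theorem nonadaptive_unitRange_upper_bound :
    ∃ C : ℝ, 0 < C ∧ ∀ n : ℕ, 2 ≤ n → ∀ I : OSMInstance n,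
      (∃ T : Fin n → Fin n → ℝ, (∀ i j, 0 ≤ T i j ∧ T i j ≤ 1) ∧
        ∃ f : (Fin n → Fin n → Bool) → Finset (Fin n × Fin n),
          (∀ b, I.IsMatching (f b)) ∧
          ∀ v : Fin n → Fin n → ℝ, I.Consistent v → I.UnitRange v →
            I.ParetoOptimal (f (fun i j => decide (T i j ≤ v i j))) ∧
            ∀ μstar, I.ParetoOptimal μstar →
              I.SW v μstar ≤
                C * Real.sqrt n * I.SW v (f (fun i j => decide (T i j ≤ v i j)))) ∧
      (∀ p ∈ PrioritySet n,
        ∃ T : Fin n → Fin n → ℝ, (∀ i j, 0 ≤ T i j ∧ T i j ≤ 1) ∧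
        ∃ f : (Fin n → Fin n → Bool) → Finset (Fin n × Fin n),
          (∀ b, I.IsMatching (f b)) ∧
          ∀ v : Fin n → Fin n → ℝ, I.Consistent v → I.UnitRange v →
            I.IsPriorityMatching p (f (fun i j => decide (T i j ≤ v i j))) ∧
            ∀ μstar, I.IsPriorityMatching p μstar →
              I.SW v μstar ≤
                C * Real.sqrt n * I.SW v (f (fun i j => decide (T i j ≤ v i j)))) := by
  refine ⟨2, two_pos, fun n hn I => ?_⟩
  have hpareto : ∀ p ∈ PrioritySet n, ∀ μ, I.IsPriorityMatching p μ → I.ParetoOptimal μ :=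
    fun p hp μ hμ =>
      hμ.paretoOptimal (PrioritySet.pos_and_anti hn hp).1 (PrioritySet.pos_and_anti hn hp).2
  refine ⟨OSMInstance.exists_threshold_algorithm (by omega) _ (fun _ h => h) ?_, fun p hp =>
    OSMInstance.exists_threshold_algorithm (by omega) _ (hpareto p hp)
      (I.exists_isMaxWeightMatching _)⟩
  obtain ⟨μ, hμ⟩ := I.exists_isMaxWeightMatching (fun e => pRankMaximal n (I.edgeRank e))
  exact ⟨μ, hpareto _ (Or.inl rfl) μ hμ⟩
end
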